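/- Let n ≥ 2 be an integer. Then the solution set {(c,λ) ∈ ℂ × ℂ : r(c,λ) = 0 and p_n(c,λ) = 0} equals the set consisting of the six points: (−24, −1/245); (1/2, 2/49); (−1−6n, −(1 − 27n − 60n^2 + 60n^3) / (14(1+3n)(30n−17)(1+n+2n^2))); (−(2+n)/(n−1), (n−1)(16 + 30n − 33n^2 + 2n^3) / (7(1+2n)(17n−32)(2−3n+2n^2))); (−2n, −(16 − 3n − 45n^2 + 10n^3) / (7(1+2n)(5n−11)(8+n+2n^2))); and (4n/(3+2n), (3+2n)(−24 − 51n − 6n^2 + 16n^3) / (7(2n−3)(33+32n)(4+5n+2n^2))). -/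

import Mathlib

/-- The polynomial `f(c,n)` from the type-C truncation polynomial. -/
noncomputable def fC (c n : ℂ) : ℂ :=
  -204 * c ^ 2 - 192 * c ^ 3 + 171 * c ^ 4 + 952 * c * n - 4612 * c ^ 2 * n
    + 2348 * c ^ 3 * n - 38 * c ^ 4 * n + 1568 * n ^ 2 - 7708 * c * n ^ 2
    + 1788 * c ^ 2 * n ^ 2 + 2401 * c ^ 3 * n ^ 2 - 74 * c ^ 4 * n ^ 2
    + 560 * n ^ 3 - 18936 * c * n ^ 3 + 22280 * c ^ 2 * n ^ 3
    - 2112 * c ^ 3 * n ^ 3 + 8 * c ^ 4 * n ^ 3 - 16304 * n ^ 4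
    + 18640 * c * n ^ 4 + 3420 * c ^ 2 * n ^ 4 - 364 * c ^ 3 * n ^ 4
    + 8 * c ^ 4 * n ^ 4 - 17408 * n ^ 5 + 27680 * c * n ^ 5
    - 10576 * c ^ 2 * n ^ 5 + 304 * c ^ 3 * n ^ 5 - 3264 * n ^ 6
    - 3072 * c * n ^ 6 + 2736 * c ^ 2 * n ^ 6

/-- The polynomial `g(c,n)` from the type-C truncation polynomial. -/
noncomputable def gC (c n : ℂ) : ℂ :=
  -14 * (c - 1) * (2 * c - 1) * (22 + 5 * c) * (n - 2) * (n - 1)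
    * (3 * c + 10 * n + 2 * c * n + 12 * n ^ 2)
    * (5 * c + 28 * n + 2 * c * n + 40 * n ^ 2)

/-- The polynomial `h(c,n)` from the type-C truncation polynomial. -/
noncomputable def hC (c n : ℂ) : ℂ :=
  49 * (c - 1) ^ 2 * (22 + 5 * c) ^ 2
    * (21 * c ^ 2 + 70 * c * n - 14 * c ^ 2 * n + 200 * n ^ 2 - 135 * c * n ^ 2
      - 26 * c ^ 2 * n ^ 2 + 380 * n ^ 3 - 176 * c * n ^ 3 + 8 * c ^ 2 * n ^ 3
      + 436 * n ^ 4 + 132 * c * n ^ 4 + 8 * c ^ 2 * n ^ 4 + 448 * n ^ 5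
      + 112 * c * n ^ 5 + 336 * n ^ 6)

/-- The type-C truncation polynomial `p_n(c,λ) = f(c,n) + λ·g(c,n) + λ²·h(c,n)`. -/
noncomputable def pC (n c lam : ℂ) : ℂ := fC c n + lam * gC c n + lam ^ 2 * hC c n

/-- The parafermion-orbifold truncation polynomial `r(c,λ)`. -/
noncomputable def rP (c lam : ℂ) : ℂ :=
  7 * lam * (c - 1) * (22 + 5 * c) * (16 - c + c ^ 2)
    + 64 + 6 * c - 45 * c ^ 2 - 5 * c ^ 3

/-!
Since `r` is linear in `λ`, a point `(c, λ)` of its curve is determined by `c`: the coefficient of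
`λ` and the constant term of `r` have no common zero. Eliminating `λ`, the abscissae of the
intersection points are the zeros of the resultant of `r` and `p_n` in `λ` at which the coefficient
of `λ` in `r` does not vanish, and this resultant splits into linear factors in `c`.
-/

/-- The coefficient of `λ` in `r(c,λ)`. The constant term is written `rP c 0`. -/
noncomputable def rLead (c : ℂ) : ℂ := 7 * (c - 1) * (22 + 5 * c) * (16 - c + c ^ 2)

/-- The resultant of `r(c,λ)` and `p_n(c,λ)` with respect to `λ`, as a polynomial in `c` and `n`. -/
noncomputable def lamResultant (n c : ℂ) : ℂ :=
  rLead c ^ 2 * fC c n - rLead c * rP c 0 * gC c n + rP c 0 ^ 2 * hC c n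

/-- The parameters `n` for which the curves `r = 0` and `p_n = 0` have no common component and the
four intersection points depending on `n` are finite. The first two conditions say that `p_n` does
not vanish identically on `r = 0`, the next two that the abscissae are finite, and the last four
that the abscissae are not poles of `λ` as a function of `c` on `r = 0`. -/
structure IsTypeCRegular (n : ℂ) : Prop where
  add_one_ne_zero : n + 1 ≠ 0
  two_mul_sub_one_ne_zero : 2 * n - 1 ≠ 0
  sub_one_ne_zero : n - 1 ≠ 0
  three_add_two_mul_ne_zero : 3 + 2 * n ≠ 0
  denom_neg_one_sub_six_mul_ne_zero :
    14 * (1 + 3 * n) * (30 * n - 17) * (1 + n + 2 * n ^ 2) ≠ 0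
  denom_neg_two_add_div_ne_zero :
    7 * (1 + 2 * n) * (17 * n - 32) * (2 - 3 * n + 2 * n ^ 2) ≠ 0
  denom_neg_two_mul_ne_zero :
    7 * (1 + 2 * n) * (5 * n - 11) * (8 + n + 2 * n ^ 2) ≠ 0
  denom_four_mul_div_ne_zero :
    7 * (2 * n - 3) * (33 + 32 * n) * (4 + 5 * n + 2 * n ^ 2) ≠ 0

section ParafermionCurve

variable {c l c₀ l₀ : ℂ}

lemma rP_eq_rLead_mul_add (c l : ℂ) : rP c l = rLead c * l + rP c 0 := by
  unfold rP rLead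
  ring

lemma rP_zero_right (c : ℂ) : rP c 0 = 64 + 6 * c - 45 * c ^ 2 - 5 * c ^ 3 := by
  simp [rP]

lemma rP_zero_ne_zero_of_rLead_eq_zero (h : rLead c = 0) : rP c 0 ≠ 0 := by
  have h_cases : (c - 1 = 0 ∨ 22 + 5 * c = 0) ∨ 16 - c + c ^ 2 = 0 := by
    simpa [rLead] using h
  intro h_const
  rcases h_cases with (h_one | h_neg) | h_quad
  · rw [sub_eq_zero.mp h_one] at h_const
    norm_num [rP] at h_const
  · have hc : c = -22 / 5 := by linear_combination h_neg / 5
    rw [hc] at h_const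
    norm_num [rP] at h_const
  · -- Modulo the quadratic factor, the constant term of `r` reduces to `36 (c + 24)`.
    have hc : c = -24 := by
      rw [rP_zero_right] at h_const
      linear_combination h_const / 36 + (5 * c + 50) / 36 * h_quad
    rw [hc] at h_quad
    norm_num at h_quad

lemma rLead_ne_zero_of_rP_eq_zero (h : rP c l = 0) : rLead c ≠ 0 := by
  intro h_lead
  rw [rP_eq_rLead_mul_add, h_lead, zero_mul, zero_add] at h
  exact rP_zero_ne_zero_of_rLead_eq_zero h_lead h

lemma eq_of_rP_eq_zero (h : rP c l = 0) (h₀ : rP c l₀ = 0) : l = l₀ := by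
  apply mul_left_cancel₀ (rLead_ne_zero_of_rP_eq_zero h)
  linear_combination h - h₀ - rP_eq_rLead_mul_add c l + rP_eq_rLead_mul_add c l₀

lemma rP_eq_zero_and_eq_iff (h₀ : rP c₀ l₀ = 0) :
    rP c l = 0 ∧ c = c₀ ↔ (c, l) = (c₀, l₀) := by
  rw [Prod.mk.injEq]
  constructor
  · rintro ⟨h, rfl⟩
    exact ⟨rfl, eq_of_rP_eq_zero h h₀⟩
  · rintro ⟨rfl, rfl⟩
    exact ⟨h₀, rfl⟩

lemma rP_div_eq_zero {a d : ℂ} (hd : d ≠ 0) (h : rLead c * a + rP c 0 * d = 0) :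
    rP c (a / d) = 0 := by
  rw [rP_eq_rLead_mul_add, ← mul_div_assoc, div_add' _ _ _ hd, h, zero_div]

-- The factor `v` before `a` balances the degrees in `c` of `rLead` (four) and of `rP c 0` (three).
lemma rP_div_mul_div_eq_zero {u v a d : ℂ} (hv : v ≠ 0) (hd : d ≠ 0)
    (h : 7 * (u - v) * (22 * v + 5 * u) * (16 * v ^ 2 - u * v + u ^ 2) * a
      + (64 * v ^ 3 + 6 * u * v ^ 2 - 45 * u ^ 2 * v - 5 * u ^ 3) * d = 0) :
    rP (u / v) (v * a / d) = 0 := by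
  apply rP_div_eq_zero hd
  rw [rLead, rP_zero_right]
  field_simp
  linear_combination h

end ParafermionCurve

section IntersectionPoints

variable {n : ℂ}

lemma rP_neg_twenty_four : rP (-24) (-1 / 245) = 0 := by
  norm_num [rP]

lemma rP_one_half : rP (1 / 2) (2 / 49) = 0 := by
  norm_num [rP]

lemma rP_neg_one_sub_six_mul
    (hd : 14 * (1 + 3 * n) * (30 * n - 17) * (1 + n + 2 * n ^ 2) ≠ 0) :
    rP (-1 - 6 * n)
      (-(1 - 27 * n - 60 * n ^ 2 + 60 * n ^ 3)
        / (14 * (1 + 3 * n) * (30 * n - 17) * (1 + n + 2 * n ^ 2))) = 0 := by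
  apply rP_div_eq_zero hd
  rw [rLead, rP_zero_right]
  ring

lemma rP_neg_two_add_div (hn : n - 1 ≠ 0)
    (hd : 7 * (1 + 2 * n) * (17 * n - 32) * (2 - 3 * n + 2 * n ^ 2) ≠ 0) :
    rP (-(2 + n) / (n - 1))
      ((n - 1) * (16 + 30 * n - 33 * n ^ 2 + 2 * n ^ 3)
        / (7 * (1 + 2 * n) * (17 * n - 32) * (2 - 3 * n + 2 * n ^ 2))) = 0 := by
  apply rP_div_mul_div_eq_zero hn hd
  ring

lemma rP_neg_two_mul (hd : 7 * (1 + 2 * n) * (5 * n - 11) * (8 + n + 2 * n ^ 2) ≠ 0) :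
    rP (-(2 * n))
      (-(16 - 3 * n - 45 * n ^ 2 + 10 * n ^ 3)
        / (7 * (1 + 2 * n) * (5 * n - 11) * (8 + n + 2 * n ^ 2))) = 0 := by
  apply rP_div_eq_zero hd
  rw [rLead, rP_zero_right]
  ring

lemma rP_four_mul_div (hn : 3 + 2 * n ≠ 0)
    (hd : 7 * (2 * n - 3) * (33 + 32 * n) * (4 + 5 * n + 2 * n ^ 2) ≠ 0) :
    rP (4 * n / (3 + 2 * n))
      ((3 + 2 * n) * (-24 - 51 * n - 6 * n ^ 2 + 16 * n ^ 3)
        / (7 * (2 * n - 3) * (33 + 32 * n) * (4 + 5 * n + 2 * n ^ 2))) = 0 := by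
  apply rP_div_mul_div_eq_zero hn hd
  ring

end IntersectionPoints

section Elimination

variable {n c l : ℂ}

lemma rLead_sq_mul_pC (h : rP c l = 0) : rLead c ^ 2 * pC n c l = lamResultant n c := by
  have h_lam : rLead c * l = -rP c 0 := by
    linear_combination h - rP_eq_rLead_mul_add c l
  calc rLead c ^ 2 * pC n c l
      = rLead c ^ 2 * fC c n + rLead c * (rLead c * l) * gC c n
          + (rLead c * l) ^ 2 * hC c n := by unfold pC; ring
    _ = lamResultant n c := by rw [h_lam, lamResultant]; ring

lemma lamResultant_eq_prod (n c : ℂ) :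
    lamResultant n c =
      8 * (7 * (c - 1) * (22 + 5 * c)) ^ 2 * ((n + 1) * (2 * n - 1))
        * ((c + 24) ^ 2 * (2 * c - 1) ^ 2 * (c + 1 + 6 * n)
          * (c * (n - 1) + (2 + n)) * (c + 2 * n) * (c * (3 + 2 * n) - 4 * n)) := by
  unfold lamResultant rLead rP fC gC hC
  ring

lemma pC_eq_zero_iff_of_rP_eq_zero (hn : n + 1 ≠ 0) (hn' : 2 * n - 1 ≠ 0) (h : rP c l = 0) :
    pC n c l = 0 ↔
      c + 24 = 0 ∨ 2 * c - 1 = 0 ∨ c + 1 + 6 * n = 0 ∨ c * (n - 1) + (2 + n) = 0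
        ∨ c + 2 * n = 0 ∨ c * (3 + 2 * n) - 4 * n = 0 := by
  have h_lead : rLead c ≠ 0 := rLead_ne_zero_of_rP_eq_zero h
  have h_factor : 7 * (c - 1) * (22 + 5 * c) ≠ 0 := left_ne_zero_of_mul h_lead
  have h_const : 8 * (7 * (c - 1) * (22 + 5 * c)) ^ 2 * ((n + 1) * (2 * n - 1)) ≠ 0 :=
    mul_ne_zero (mul_ne_zero (by norm_num) (pow_ne_zero 2 h_factor)) (mul_ne_zero hn hn')
  rw [← mul_eq_zero_iff_left (pow_ne_zero 2 h_lead), rLead_sq_mul_pC h, lamResultant_eq_prod,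
    mul_eq_zero_iff_left h_const]
  simp only [mul_eq_zero, pow_eq_zero_iff two_ne_zero, or_assoc]

lemma IsTypeCRegular.pC_eq_zero_iff (hn : IsTypeCRegular n) (h : rP c l = 0) :
    pC n c l = 0 ↔
      c = -24 ∨ c = 1 / 2 ∨ c = -1 - 6 * n ∨ c = -(2 + n) / (n - 1)
        ∨ c = -(2 * n) ∨ c = 4 * n / (3 + 2 * n) := by
  rw [pC_eq_zero_iff_of_rP_eq_zero hn.add_one_ne_zero hn.two_mul_sub_one_ne_zero h,
    eq_div_iff (two_ne_zero' ℂ), eq_div_iff hn.sub_one_ne_zero,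
    eq_div_iff hn.three_add_two_mul_ne_zero]
  refine or_congr ?_ (or_congr ?_ (or_congr ?_ (or_congr ?_ (or_congr ?_ ?_)))) <;>
    constructor <;> intro h_root <;> linear_combination h_root

end Elimination

lemma isTypeCRegular_intCast {n : ℤ} (hn : n ≠ 1) (hn' : n ≠ -1) :
    IsTypeCRegular (n : ℂ) := by
  have h₁ : 1 + n + 2 * n ^ 2 ≠ 0 := by nlinarith [sq_nonneg (n + 1)]
  have h₂ : 2 - 3 * n + 2 * n ^ 2 ≠ 0 := by nlinarith [sq_nonneg (n - 1)]
  have h₃ : 8 + n + 2 * n ^ 2 ≠ 0 := by nlinarith [sq_nonneg (n + 1)]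
  have h₄ : 4 + 5 * n + 2 * n ^ 2 ≠ 0 := by nlinarith [sq_nonneg (n + 1)]
  constructor <;> norm_cast
  any_goals lia
  all_goals
    simp only [mul_eq_zero, not_or]
    lia

theorem parafermion_typeC_intersection_general {n : ℂ} (hn : IsTypeCRegular n) :
    {p : ℂ × ℂ | rP p.1 p.2 = 0 ∧ pC n p.1 p.2 = 0}
      = ({((-24 : ℂ), (-1/245 : ℂ)),
          ((1/2 : ℂ), (2/49 : ℂ)),
          (-1 - 6 * n,
            -(1 - 27 * n - 60 * n ^ 2 + 60 * n ^ 3)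
              / (14 * (1 + 3 * n) * (30 * n - 17) * (1 + n + 2 * n ^ 2))),
          (-(2 + n) / (n - 1),
            (n - 1) * (16 + 30 * n - 33 * n ^ 2 + 2 * n ^ 3)
              / (7 * (1 + 2 * n) * (17 * n - 32) * (2 - 3 * n + 2 * n ^ 2))),
          (-(2 * n),
            -(16 - 3 * n - 45 * n ^ 2 + 10 * n ^ 3)
              / (7 * (1 + 2 * n) * (5 * n - 11) * (8 + n + 2 * n ^ 2))),
          (4 * n / (3 + 2 * n),
            (3 + 2 * n) * (-24 - 51 * n - 6 * n ^ 2 + 16 * n ^ 3)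
              / (7 * (2 * n - 3) * (33 + 32 * n) * (4 + 5 * n + 2 * n ^ 2)))} :
          Set (ℂ × ℂ)) := by
  have h₁ := rP_neg_twenty_four
  have h₂ := rP_one_half
  have h₃ := rP_neg_one_sub_six_mul hn.denom_neg_one_sub_six_mul_ne_zero
  have h₄ := rP_neg_two_add_div hn.sub_one_ne_zero hn.denom_neg_two_add_div_ne_zero
  have h₅ := rP_neg_two_mul hn.denom_neg_two_mul_ne_zero
  have h₆ := rP_four_mul_div hn.three_add_two_mul_ne_zero hn.denom_four_mul_div_ne_zero
  ext ⟨c, l⟩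
  rw [Set.mem_ofPred_eq, and_congr_right fun h ↦ hn.pC_eq_zero_iff h]
  simp only [and_or_left, rP_eq_zero_and_eq_iff h₁, rP_eq_zero_and_eq_iff h₂,
    rP_eq_zero_and_eq_iff h₃, rP_eq_zero_and_eq_iff h₄, rP_eq_zero_and_eq_iff h₅,
    rP_eq_zero_and_eq_iff h₆, Set.mem_insert_iff, Set.mem_singleton_iff]

/-- For `n ≥ 2`, the intersection of the parafermion-orbifold truncation curve
`{r = 0}` and the type-C truncation curve `{p_n = 0}` consists of exactly the
six listed points. -/
theorem parafermion_typeC_intersection (n : ℤ) (hn : 2 ≤ n)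
    (nn : ℂ) (hnn : nn = (n : ℂ)) :
    {p : ℂ × ℂ | rP p.1 p.2 = 0 ∧ pC nn p.1 p.2 = 0}
      = ({((-24 : ℂ), (-1/245 : ℂ)),
          ((1/2 : ℂ), (2/49 : ℂ)),
          (-1 - 6 * nn,
            -(1 - 27 * nn - 60 * nn ^ 2 + 60 * nn ^ 3)
              / (14 * (1 + 3 * nn) * (30 * nn - 17) * (1 + nn + 2 * nn ^ 2))),
          (-(2 + nn) / (nn - 1),
            (nn - 1) * (16 + 30 * nn - 33 * nn ^ 2 + 2 * nn ^ 3)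
              / (7 * (1 + 2 * nn) * (17 * nn - 32) * (2 - 3 * nn + 2 * nn ^ 2))),
          (-(2 * nn),
            -(16 - 3 * nn - 45 * nn ^ 2 + 10 * nn ^ 3)
              / (7 * (1 + 2 * nn) * (5 * nn - 11) * (8 + nn + 2 * nn ^ 2))),
          (4 * nn / (3 + 2 * nn),
            (3 + 2 * nn) * (-24 - 51 * nn - 6 * nn ^ 2 + 16 * nn ^ 3)
              / (7 * (2 * nn - 3) * (33 + 32 * nn) * (4 + 5 * nn + 2 * nn ^ 2)))} :
          Set (ℂ × ℂ)) := by
  subst hnn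
  exact parafermion_typeC_intersection_general
    (isTypeCRegular_intCast (by lia) (by lia))
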